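/- arXiv:2602.11486 — 4 statements merged into one kernel-verified Lean document; each statement's English description precedes it below -/
import Mathlib

section
/- Let 0 < δ ≤ Δ and let v_A¹, v_A², v_B¹ : [0,1] → [δ, Δ] be measurable with ∫₀¹ v_A¹ = ∫₀¹ v_A² = ∫₀¹ v_B¹ = 1. Define V_i(x) = ∫₀ˣ v_A^i(y) dy for i = 1, 2, and f = V₂⁻¹ ∘ V₁ : [0,1] → [0,1]. Then: (i) f is a bi-Lipschitz bijection of [0,1] onto itself; (ii) for every measurable C ⊆ [0,1], ∫_C v_A¹(x) dx = ∫_{f(C)} v_A²(x) dx; (iii) the function v_B²(x) = (v_B¹(f⁻¹(x)) / v_A¹(f⁻¹(x))) · v_A²(x) takes values in [δ²/Δ, Δ²/δ], satisfies ∫₀¹ v_B²(x) dx = 1, and ∫_C v_B¹(x) dx = ∫_{f(C)} v_B²(x) dx for every measurable C ⊆ [0,1]. -/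
/-!
Both `∫_C v_A¹ = ∫_{f(C)} v_A²` and `∫_C v_B¹ = ∫_{f(C)} v_B²` follow from the single fact that `f`
pushes `v_A¹ dx` forward to `v_A² dx`, applied to the integrands `1` and `v_B¹ / v_A¹`. That fact
needs no derivative of `f`: since `f` is increasing and `V₂ ∘ f = V₁`, the pushforward of `v_A¹ dx`
and `v_A² dx` have the same distribution function. The bi-Lipschitz bounds also come from
`V₂ ∘ f = V₁`, because `V₁` and `V₂` stretch distances by factors between `δ` and `Δ`.
-/

open MeasureTheory Set

noncomputable section

/-- A value density: measurable, bounded in `[δ, Δ]` on `[0,1]`, integrating to 1 on `[0,1]`. -/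
def IsValueDensity (δ Δ : ℝ) (v : ℝ → ℝ) : Prop :=
  Measurable v ∧ (∀ x ∈ Set.Icc (0:ℝ) 1, v x ∈ Set.Icc δ Δ) ∧
    (∫ x in Set.Icc (0:ℝ) 1, v x) = 1

/-- The cumulative value function `V(x) = ∫₀ˣ v(y) dy`. -/
def cumVal (v : ℝ → ℝ) : ℝ → ℝ := fun x => ∫ y in (0:ℝ)..x, v y

/-- The warping map `f = V₂⁻¹ ∘ V₁`, where `V₂⁻¹` is the inverse of `V₂` on `[0,1]`. -/
def warp (vA1 vA2 : ℝ → ℝ) : ℝ → ℝ :=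
  fun x => Function.invFunOn (cumVal vA2) (Set.Icc 0 1) (cumVal vA1 x)

/-- The inverse `f⁻¹` of the warping map on `[0,1]`. -/
def warpInv (vA1 vA2 : ℝ → ℝ) : ℝ → ℝ :=
  Function.invFunOn (warp vA1 vA2) (Set.Icc 0 1)

/-- The warped Bob density `v_B²(x) = (v_B¹(f⁻¹(x)) / v_A¹(f⁻¹(x))) · v_A²(x)`. -/
def warpedDensity (vA1 vA2 vB1 : ℝ → ℝ) : ℝ → ℝ :=
  fun x => vB1 (warpInv vA1 vA2 x) / vA1 (warpInv vA1 vA2 x) * vA2 x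

theorem intervalIntegral_mem_Icc {v : ℝ → ℝ} {a b m M : ℝ} (hab : a ≤ b)
    (hv : IntervalIntegrable v volume a b) (hbound : ∀ x ∈ Icc a b, v x ∈ Icc m M) :
    ∫ x in a..b, v x ∈ Icc (m * (b - a)) (M * (b - a)) := by
  constructor
  · calc m * (b - a) = ∫ _ in a..b, m := by simp [mul_comm]
      _ ≤ ∫ x in a..b, v x := intervalIntegral.integral_mono_on hab intervalIntegrable_const hv
        fun x hx => (hbound x hx).1
  · calc ∫ x in a..b, v x ≤ ∫ _ in a..b, M :=
        intervalIntegral.integral_mono_on hab hv intervalIntegrable_const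
          fun x hx => (hbound x hx).2
      _ = M * (b - a) := by simp [mul_comm]

theorem map_eq_of_strictMonoOn_of_measure_Iic_eq {α β : Type*} [LinearOrder α] [MeasurableSpace α]
    [LinearOrder β] [TopologicalSpace β] [OrderTopology β] [SecondCountableTopology β]
    [MeasurableSpace β] [BorelSpace β] {μ : Measure α} [IsFiniteMeasure μ] {ν : Measure β}
    {f : α → β} {s : Set α} {c d : β} (hcd : c ≤ d) (hf : AEMeasurable f μ)
    (hmono : StrictMonoOn f s) (himage : f '' s = Icc c d)
    (hμ : ∀ᵐ x ∂μ, x ∈ s) (hν : ∀ᵐ y ∂ν, y ∈ Icc c d)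
    (hIic : ∀ x ∈ s, μ (Iic x) = ν (Iic (f x))) : μ.map f = ν := by
  refine Measure.ext_of_Iic _ _ fun t => ?_
  rw [Measure.map_apply_of_aemeasurable hf measurableSet_Iic]
  have hfs : ∀ x ∈ s, f x ∈ Icc c d := fun x hx => himage ▸ mem_image_of_mem f hx
  rcases lt_or_ge t c with htc | hct
  · have hμt : μ (f ⁻¹' Iic t) = 0 := measure_eq_zero_iff_ae_notMem.2 <|
      hμ.mono fun x hx hxt => (htc.trans_le (hfs x hx).1).not_ge hxt
    have hνt : ν (Iic t) = 0 := measure_eq_zero_iff_ae_notMem.2 <|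
      hν.mono fun y hy hyt => (htc.trans_le hy.1).not_ge hyt
    rw [hμt, hνt]
  · obtain ⟨x, hx, hfx⟩ : min t d ∈ f '' s := himage ▸ ⟨le_min hct hcd, min_le_right t d⟩
    have le_iff : ∀ y ∈ Icc c d, y ≤ t ↔ y ≤ f x := fun y hy => by
      rw [hfx, le_min_iff, and_iff_left hy.2]
    calc μ (f ⁻¹' Iic t) = μ (Iic x) := measure_congr <| hμ.mono fun y hy =>
          propext ((le_iff _ (hfs y hy)).trans (hmono.le_iff_le hy hx))
      _ = ν (Iic (f x)) := hIic x hx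
      _ = ν (Iic t) := measure_congr <| hν.mono fun y hy => propext (le_iff y hy).symm

/-- The measure `v(x) dx` on `[0,1]`; it carries no mass outside `[0,1]`, whatever `v` is there. -/
def valueMeasure (v : ℝ → ℝ) : Measure ℝ :=
  (volume.restrict (Icc 0 1)).withDensity fun x => ENNReal.ofReal (v x)

theorem valueMeasure_absolutelyContinuous (v : ℝ → ℝ) :
    valueMeasure v ≪ volume.restrict (Icc 0 1) :=
  withDensity_absolutelyContinuous _ _

theorem ae_valueMeasure_mem_Icc (v : ℝ → ℝ) : ∀ᵐ x ∂valueMeasure v, x ∈ Icc (0 : ℝ) 1 :=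
  (valueMeasure_absolutelyContinuous v).ae_le (ae_restrict_mem measurableSet_Icc)

namespace IsValueDensity

variable {δ Δ : ℝ} {v w : ℝ → ℝ}

theorem pos (hv : IsValueDensity δ Δ v) (hδ : 0 < δ) {x : ℝ} (hx : x ∈ Icc (0 : ℝ) 1) : 0 < v x :=
  hδ.trans_le (hv.2.1 x hx).1

theorem integrableOn (hv : IsValueDensity δ Δ v) : IntegrableOn v (Icc 0 1) :=
  .of_integral_ne_zero (by rw [hv.2.2]; exact one_ne_zero)

theorem intervalIntegrable (hv : IsValueDensity δ Δ v) {x y : ℝ} (hx : x ∈ Icc (0 : ℝ) 1)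
    (hy : y ∈ Icc (0 : ℝ) 1) : IntervalIntegrable v volume x y :=
  (hv.integrableOn.mono_set (ordConnected_Icc.uIcc_subset hx hy)).intervalIntegrable

theorem cumVal_sub_mem_Icc (hv : IsValueDensity δ Δ v) {x y : ℝ} (hx : x ∈ Icc (0 : ℝ) 1)
    (hy : y ∈ Icc (0 : ℝ) 1) (hxy : x ≤ y) :
    cumVal v y - cumVal v x ∈ Icc (δ * (y - x)) (Δ * (y - x)) := by
  have h0 : (0 : ℝ) ∈ Icc (0 : ℝ) 1 := left_mem_Icc.2 zero_le_one
  rw [cumVal, cumVal, intervalIntegral.integral_interval_sub_left (hv.intervalIntegrable h0 hy)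
    (hv.intervalIntegrable h0 hx)]
  exact intervalIntegral_mem_Icc hxy (hv.intervalIntegrable hx hy)
    fun t ht => hv.2.1 t (Icc_subset_Icc hx.1 hy.2 ht)

theorem strictMonoOn_cumVal (hv : IsValueDensity δ Δ v) (hδ : 0 < δ) :
    StrictMonoOn (cumVal v) (Icc 0 1) := fun _ hx _ hy hxy =>
  sub_pos.1 <| (mul_pos hδ (sub_pos.2 hxy)).trans_le (hv.cumVal_sub_mem_Icc hx hy hxy.le).1

theorem abs_cumVal_sub_mem_Icc (hv : IsValueDensity δ Δ v) (hδ : 0 < δ) {x y : ℝ}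
    (hx : x ∈ Icc (0 : ℝ) 1) (hy : y ∈ Icc (0 : ℝ) 1) :
    |cumVal v x - cumVal v y| ∈ Icc (δ * |x - y|) (Δ * |x - y|) := by
  wlog hyx : y ≤ x generalizing x y
  · simpa only [abs_sub_comm] using this hy hx (le_of_not_ge hyx)
  have hV : cumVal v y ≤ cumVal v x := (hv.strictMonoOn_cumVal hδ).monotoneOn hy hx hyx
  rw [abs_of_nonneg (sub_nonneg.2 hyx), abs_of_nonneg (sub_nonneg.2 hV)]
  exact hv.cumVal_sub_mem_Icc hy hx hyx

theorem bijOn_cumVal (hv : IsValueDensity δ Δ v) (hδ : 0 < δ) :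
    BijOn (cumVal v) (Icc 0 1) (Icc 0 1) := by
  have hmono := hv.strictMonoOn_cumVal hδ
  have hcont : ContinuousOn (cumVal v) (Icc 0 1) := by
    rw [← uIcc_of_le (zero_le_one' ℝ)]
    exact intervalIntegral.continuousOn_primitive_interval
      (uIcc_of_le (zero_le_one' ℝ) ▸ hv.integrableOn)
  have h0 : cumVal v 0 = 0 := intervalIntegral.integral_same
  have h1 : cumVal v 1 = 1 := by
    rw [cumVal, intervalIntegral.integral_of_le zero_le_one, ← integral_Icc_eq_integral_Ioc, hv.2.2]
  have hmaps := hmono.monotoneOn.mapsTo_Icc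
  have hsurj := intermediate_value_Icc zero_le_one hcont
  rw [h0, h1] at hmaps hsurj
  exact ⟨hmaps, hmono.injOn, hsurj⟩

theorem invOn_warp (hv : IsValueDensity δ Δ v) (hw : IsValueDensity δ Δ w) (hδ : 0 < δ) :
    InvOn (warp w v) (warp v w) (Icc 0 1) (Icc 0 1) :=
  have hV := hv.bijOn_cumVal hδ
  have hW := hw.bijOn_cumVal hδ
  hV.invOn_invFunOn.comp hW.invOn_invFunOn.symm hV.mapsTo hW.mapsTo

theorem bijOn_warp (hv : IsValueDensity δ Δ v) (hw : IsValueDensity δ Δ w) (hδ : 0 < δ) :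
    BijOn (warp v w) (Icc 0 1) (Icc 0 1) :=
  have hW := hw.bijOn_cumVal hδ
  (hW.invOn_invFunOn.symm.bijOn hW.surjOn.mapsTo_invFunOn hW.mapsTo).comp (hv.bijOn_cumVal hδ)

theorem image_warp_subset_Icc (hv : IsValueDensity δ Δ v) (hw : IsValueDensity δ Δ w) (hδ : 0 < δ)
    {C : Set ℝ} (hCI : C ⊆ Icc 0 1) : warp v w '' C ⊆ Icc 0 1 :=
  ((hv.bijOn_warp hw hδ).mapsTo.mono_left hCI).image_subset

theorem cumVal_warp (hv : IsValueDensity δ Δ v) (hw : IsValueDensity δ Δ w) (hδ : 0 < δ) {x : ℝ}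
    (hx : x ∈ Icc (0 : ℝ) 1) : cumVal w (warp v w x) = cumVal v x :=
  (hw.bijOn_cumVal hδ).surjOn.rightInvOn_invFunOn ((hv.bijOn_cumVal hδ).mapsTo hx)

theorem strictMonoOn_warp (hv : IsValueDensity δ Δ v) (hw : IsValueDensity δ Δ w) (hδ : 0 < δ) :
    StrictMonoOn (warp v w) (Icc 0 1) := fun x hx y hy hxy => by
  have hmaps := (hv.bijOn_warp hw hδ).mapsTo
  rw [← (hw.strictMonoOn_cumVal hδ).lt_iff_lt (hmaps hx) (hmaps hy), hv.cumVal_warp hw hδ hx,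
    hv.cumVal_warp hw hδ hy]
  exact hv.strictMonoOn_cumVal hδ hx hy hxy

theorem measurableSet_image_warp (hv : IsValueDensity δ Δ v) (hw : IsValueDensity δ Δ w)
    (hδ : 0 < δ) {C : Set ℝ} (hCI : C ⊆ Icc 0 1) (hC : MeasurableSet C) :
    MeasurableSet (warp v w '' C) :=
  hC.image_of_monotoneOn ((hv.strictMonoOn_warp hw hδ).monotoneOn.mono hCI)

theorem abs_warp_sub_mem_Icc (hv : IsValueDensity δ Δ v) (hw : IsValueDensity δ Δ w) (hδ : 0 < δ)
    (hΔ : 0 < Δ) {x y : ℝ} (hx : x ∈ Icc (0 : ℝ) 1) (hy : y ∈ Icc (0 : ℝ) 1) :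
    |warp v w x - warp v w y| ∈ Icc (δ / Δ * |x - y|) (Δ / δ * |x - y|) := by
  have hmaps := (hv.bijOn_warp hw hδ).mapsTo
  obtain ⟨hv_lower, hv_upper⟩ := hv.abs_cumVal_sub_mem_Icc hδ hx hy
  obtain ⟨hw_lower, hw_upper⟩ := hw.abs_cumVal_sub_mem_Icc hδ (hmaps hx) (hmaps hy)
  rw [hv.cumVal_warp hw hδ hx, hv.cumVal_warp hw hδ hy] at hw_lower hw_upper
  rw [div_mul_eq_mul_div, div_mul_eq_mul_div]
  exact ⟨(div_le_iff₀' hΔ).2 (hv_lower.trans hw_upper),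
    (le_div_iff₀' hδ).2 (hw_lower.trans hv_upper)⟩

theorem eqOn_warpInv (hv : IsValueDensity δ Δ v) (hw : IsValueDensity δ Δ w) (hδ : 0 < δ) :
    EqOn (warpInv v w) (warp w v) (Icc 0 1) :=
  eqOn_of_leftInvOn_of_rightInvOn (hv.bijOn_warp hw hδ).invOn_invFunOn.1 (hv.invOn_warp hw hδ).2
    (hw.bijOn_warp hv hδ).mapsTo

theorem warpedDensity_eq (hv : IsValueDensity δ Δ v) (hw : IsValueDensity δ Δ w) (hδ : 0 < δ)
    (b : ℝ → ℝ) {x : ℝ} (hx : x ∈ Icc (0 : ℝ) 1) :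
    warpedDensity v w b x = b (warp w v x) / v (warp w v x) * w x := by
  rw [warpedDensity, hv.eqOn_warpInv hw hδ hx]

theorem warpedDensity_mem_Icc (hv : IsValueDensity δ Δ v) (hw : IsValueDensity δ Δ w) (hδ : 0 < δ)
    {b : ℝ → ℝ} (hb : ∀ x ∈ Icc (0 : ℝ) 1, b x ∈ Icc δ Δ) {x : ℝ} (hx : x ∈ Icc (0 : ℝ) 1) :
    warpedDensity v w b x ∈ Icc (δ ^ 2 / Δ) (Δ ^ 2 / δ) := by
  have hy : warp w v x ∈ Icc (0 : ℝ) 1 := (hw.bijOn_warp hv hδ).mapsTo hx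
  obtain ⟨hv_lower, hv_upper⟩ := hv.2.1 _ hy
  obtain ⟨hb_lower, hb_upper⟩ := hb _ hy
  obtain ⟨hw_lower, hw_upper⟩ := hw.2.1 x hx
  have hv_pos : 0 < v (warp w v x) := hv.pos hδ hy
  have hw_pos : 0 < w x := hw.pos hδ hx
  have hb_pos : 0 < b (warp w v x) := hδ.trans_le hb_lower
  have hΔ : 0 < Δ := hw_pos.trans_le hw_upper
  rw [hv.warpedDensity_eq hw hδ b hx, div_mul_eq_mul_div, sq, sq]
  constructor <;> gcongr

theorem isFiniteMeasure_valueMeasure (hv : IsValueDensity δ Δ v) :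
    IsFiniteMeasure (valueMeasure v) :=
  isFiniteMeasure_withDensity_ofReal hv.integrableOn.2

theorem valueMeasure_Iic (hv : IsValueDensity δ Δ v) (hδ : 0 < δ) {t : ℝ}
    (ht : t ∈ Icc (0 : ℝ) 1) : valueMeasure v (Iic t) = ENNReal.ofReal (cumVal v t) := by
  have hsub : Icc 0 t ⊆ Icc 0 1 := Icc_subset_Icc_right ht.2
  have hinter : Iic t ∩ Icc 0 1 = Icc 0 t := by
    rw [inter_comm, ← Ici_inter_Iic, inter_assoc, Iic_inter_Iic, inf_of_le_right ht.2,
      Ici_inter_Iic]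
  rw [valueMeasure, withDensity_apply _ measurableSet_Iic,
    Measure.restrict_restrict measurableSet_Iic, hinter, cumVal,
    intervalIntegral.integral_of_le ht.1, ← integral_Icc_eq_integral_Ioc,
    ofReal_integral_eq_lintegral_ofReal (hv.integrableOn.mono_set hsub)]
  filter_upwards [ae_restrict_mem measurableSet_Icc] with x hx using (hv.pos hδ (hsub hx)).le

theorem setIntegral_valueMeasure (hv : IsValueDensity δ Δ v) (hδ : 0 < δ) (g : ℝ → ℝ) {S : Set ℝ}
    (hS : MeasurableSet S) (hSI : S ⊆ Icc 0 1) :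
    ∫ x in S, g x ∂valueMeasure v = ∫ x in S, g x * v x := by
  rw [valueMeasure, setIntegral_withDensity_eq_setIntegral_toReal_smul hv.1.ennreal_ofReal
    (.of_forall fun _ => ENNReal.ofReal_lt_top) g hS, Measure.restrict_restrict_of_subset hSI]
  refine setIntegral_congr_fun hS fun x hx => ?_
  simp only [smul_eq_mul, ENNReal.toReal_ofReal (hv.pos hδ (hSI hx)).le, mul_comm]

theorem aemeasurable_warp (hv : IsValueDensity δ Δ v) (hw : IsValueDensity δ Δ w) (hδ : 0 < δ) :
    AEMeasurable (warp v w) (valueMeasure v) :=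
  (aemeasurable_restrict_of_monotoneOn measurableSet_Icc
    (hv.strictMonoOn_warp hw hδ).monotoneOn).mono_ac (valueMeasure_absolutelyContinuous v)

theorem map_warp_valueMeasure (hv : IsValueDensity δ Δ v) (hw : IsValueDensity δ Δ w)
    (hδ : 0 < δ) : (valueMeasure v).map (warp v w) = valueMeasure w := by
  have := hv.isFiniteMeasure_valueMeasure
  have hbij := hv.bijOn_warp hw hδ
  refine map_eq_of_strictMonoOn_of_measure_Iic_eq zero_le_one (hv.aemeasurable_warp hw hδ)
    (hv.strictMonoOn_warp hw hδ) hbij.image_eq (ae_valueMeasure_mem_Icc v)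
    (ae_valueMeasure_mem_Icc w) fun x hx => ?_
  rw [hv.valueMeasure_Iic hδ hx, hw.valueMeasure_Iic hδ (hbij.mapsTo hx), hv.cumVal_warp hw hδ hx]

theorem setIntegral_mul_eq_setIntegral_image_warp (hv : IsValueDensity δ Δ v)
    (hw : IsValueDensity δ Δ w) (hδ : 0 < δ) {g : ℝ → ℝ} (hg : Measurable g) {C : Set ℝ}
    (hCI : C ⊆ Icc 0 1) (hC : MeasurableSet C) :
    ∫ x in C, g x * v x = ∫ x in warp v w '' C, g (warp w v x) * w x := by
  have hbij := hv.bijOn_warp hw hδ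
  have himage : warp v w '' C = warp w v ⁻¹' C ∩ Icc 0 1 := by
    rw [← hbij.image_eq, ← (hv.invOn_warp hw hδ).1.image_inter', inter_eq_left.2 hCI]
  have himage_ae : warp w v ⁻¹' C =ᵐ[valueMeasure w] (warp v w '' C : Set ℝ) := by
    rw [himage]
    exact (inter_ae_eq_left_of_ae_eq_univ (ae_eq_univ.2 (ae_valueMeasure_mem_Icc w))).symm
  -- Pushing `w dx` forward by `f⁻¹`, rather than `v dx` by `f`, needs `g` alone to be measurable
  -- instead of `g ∘ f⁻¹`.
  calc ∫ x in C, g x * v x = ∫ x in C, g x ∂valueMeasure v :=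
        (hv.setIntegral_valueMeasure hδ g hC hCI).symm
    _ = ∫ x in warp w v ⁻¹' C, g (warp w v x) ∂valueMeasure w := by
        rw [← hw.map_warp_valueMeasure hv hδ, setIntegral_map hC hg.aestronglyMeasurable
          (hw.aemeasurable_warp hv hδ)]
    _ = ∫ x in warp v w '' C, g (warp w v x) ∂valueMeasure w := setIntegral_congr_set himage_ae
    _ = ∫ x in warp v w '' C, g (warp w v x) * w x :=
        hw.setIntegral_valueMeasure hδ _ (hv.measurableSet_image_warp hw hδ hCI hC)
          (hv.image_warp_subset_Icc hw hδ hCI)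

theorem setIntegral_eq_setIntegral_image_warp (hv : IsValueDensity δ Δ v)
    (hw : IsValueDensity δ Δ w) (hδ : 0 < δ) {C : Set ℝ} (hCI : C ⊆ Icc 0 1)
    (hC : MeasurableSet C) : ∫ x in C, v x = ∫ x in warp v w '' C, w x := by
  simpa only [one_mul] using
    hv.setIntegral_mul_eq_setIntegral_image_warp hw hδ (measurable_const (a := 1)) hCI hC

theorem setIntegral_eq_setIntegral_image_warpedDensity (hv : IsValueDensity δ Δ v)
    (hw : IsValueDensity δ Δ w) (hδ : 0 < δ) {b : ℝ → ℝ} (hb : Measurable b) {C : Set ℝ}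
    (hCI : C ⊆ Icc 0 1) (hC : MeasurableSet C) :
    ∫ x in C, b x = ∫ x in warp v w '' C, warpedDensity v w b x :=
  calc ∫ x in C, b x = ∫ x in C, b x / v x * v x := setIntegral_congr_fun hC fun x hx =>
        (div_mul_cancel₀ (b x) (hv.pos hδ (hCI hx)).ne').symm
    _ = ∫ x in warp v w '' C, b (warp w v x) / v (warp w v x) * w x :=
        hv.setIntegral_mul_eq_setIntegral_image_warp hw hδ (hb.div hv.1) hCI hC
    _ = ∫ x in warp v w '' C, warpedDensity v w b x :=
        setIntegral_congr_fun (hv.measurableSet_image_warp hw hδ hCI hC) fun _ hx =>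
          (hv.warpedDensity_eq hw hδ b (hv.image_warp_subset_Icc hw hδ hCI hx)).symm

end IsValueDensity

/-- valuation warping: for value densities `v_A¹, v_A², v_B¹` with bounds
`0 < δ ≤ Δ`, the map `f = V₂⁻¹ ∘ V₁` is a bi-Lipschitz bijection of `[0,1]` onto itself,
preserves Alice values (`∫_C v_A¹ = ∫_{f(C)} v_A²`), and the warped density
`v_B²(x) = (v_B¹(f⁻¹ x)/v_A¹(f⁻¹ x))·v_A²(x)` takes values in `[δ²/Δ, Δ²/δ]`, integrates
to 1, and satisfies `∫_C v_B¹ = ∫_{f(C)} v_B²` for every measurable `C ⊆ [0,1]`. -/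
theorem valuation_warping (δ Δ : ℝ) (hδ : 0 < δ) (hδΔ : δ ≤ Δ)
    (vA1 vA2 vB1 : ℝ → ℝ)
    (hA1 : IsValueDensity δ Δ vA1) (hA2 : IsValueDensity δ Δ vA2)
    (hB1 : IsValueDensity δ Δ vB1) :
    -- (i) `f` is a bi-Lipschitz bijection of `[0,1]` onto itself
    (Set.BijOn (warp vA1 vA2) (Set.Icc 0 1) (Set.Icc 0 1) ∧
      ∃ K₁ K₂ : ℝ, 0 < K₁ ∧
        ∀ x ∈ Set.Icc (0:ℝ) 1, ∀ y ∈ Set.Icc (0:ℝ) 1,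
          K₁ * |x - y| ≤ |warp vA1 vA2 x - warp vA1 vA2 y| ∧
          |warp vA1 vA2 x - warp vA1 vA2 y| ≤ K₂ * |x - y|) ∧
    -- (ii) Alice's values are preserved
    (∀ C : Set ℝ, C ⊆ Set.Icc 0 1 → MeasurableSet C →
      ∫ x in C, vA1 x = ∫ x in (warp vA1 vA2) '' C, vA2 x) ∧
    -- (iii) the warped Bob density is a bounded density matching `v_B¹` through `f`
    ((∀ x ∈ Set.Icc (0:ℝ) 1,
        warpedDensity vA1 vA2 vB1 x ∈ Set.Icc (δ ^ 2 / Δ) (Δ ^ 2 / δ)) ∧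
      (∫ x in Set.Icc (0:ℝ) 1, warpedDensity vA1 vA2 vB1 x) = 1 ∧
      ∀ C : Set ℝ, C ⊆ Set.Icc 0 1 → MeasurableSet C →
        ∫ x in C, vB1 x = ∫ x in (warp vA1 vA2) '' C, warpedDensity vA1 vA2 vB1 x) := by
  have hΔ : 0 < Δ := hδ.trans_le hδΔ
  have hbij := hA1.bijOn_warp hA2 hδ
  have hBob : ∀ C ⊆ Icc (0 : ℝ) 1, MeasurableSet C →
      ∫ x in C, vB1 x = ∫ x in warp vA1 vA2 '' C, warpedDensity vA1 vA2 vB1 x := fun _ hCI hC =>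
    hA1.setIntegral_eq_setIntegral_image_warpedDensity hA2 hδ hB1.1 hCI hC
  have htotal : ∫ x in Icc (0 : ℝ) 1, warpedDensity vA1 vA2 vB1 x = 1 := by
    rw [← hbij.image_eq, ← hBob _ Subset.rfl measurableSet_Icc, hB1.2.2]
  exact ⟨⟨hbij, δ / Δ, Δ / δ, div_pos hδ hΔ, fun x hx y hy =>
      hA1.abs_warp_sub_mem_Icc hA2 hδ hΔ hx hy⟩,
    fun C hCI hC => hA1.setIntegral_eq_setIntegral_image_warp hA2 hδ hCI hC,
    fun x hx => hA1.warpedDensity_mem_Icc hA2 hδ hB1.2.1 hx, htotal, hBob⟩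

end
end

section
/- There exists n₀ ∈ ℕ (independent of the sequence below) such that: for every sequence a¹, a², a³, … of infinite bit vectors (elements of {0,1}^{ℕ⁺}), there exists an infinite bit vector s ∈ {0,1}^{ℕ⁺} such that for every n ≥ n₀ that is a power of 2 and every i ∈ {1, 2, …, 2·2^{2n}}, the Hamming distance between the first 10n bits of s and the first 10n bits of aⁱ is at least n/2. -/
/-!
Draw the letters of `s` independently, each value having probability at most `1/2`. Give each
agreement with a fixed word weight `4`, so that a position contributes at most `1 + 3/2 = 5/2` on
average. Markov's inequality bounds the probability of distance less than `n / 2` over `10 n`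
positions by `(5/2) ^ (10 n) / 4 ^ (19 n / 2) ≤ 32 ^ (-n)`. The union bound over all `n ≥ 1` and
all `2 * 4 ^ n` words then leaves a failure probability of at most `∑ 2 * 8 ^ (-n) = 2/7 < 1`.
-/

open MeasureTheory ProbabilityTheory
open scoped ENNReal

section IndependentEvents

variable {Ω ι : Type*} {E : ι → Set Ω}

theorem prod_one_add_mul_indicator [∀ i, DecidablePred (· ∈ E i)] (J : Finset ι) (c : ℝ≥0∞)
    (ω : Ω) :
    ∏ j ∈ J, (1 + c * (E j).indicator 1 ω) = (1 + c) ^ (J.filter fun j => ω ∈ E j).card := by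
  rw [← Finset.prod_const, Finset.prod_filter]
  exact Finset.prod_congr rfl fun j _ => by by_cases h : ω ∈ E j <;> simp [h]

variable [MeasurableSpace Ω] {μ : Measure Ω}

theorem lintegral_one_add_mul_indicator [IsProbabilityMeasure μ] {A : Set Ω}
    (hA : MeasurableSet A) (c : ℝ≥0∞) :
    ∫⁻ ω, (1 + c * A.indicator 1 ω) ∂μ = 1 + c * μ A := by
  rw [lintegral_add_left measurable_const, lintegral_one, measure_univ,
    lintegral_const_mul _ (measurable_one.indicator hA), lintegral_indicator_one hA]

theorem lintegral_prod_one_add_mul_indicator (hE : iIndepSet E μ)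
    (hEm : ∀ i, MeasurableSet (E i)) (J : Finset ι) (c : ℝ≥0∞) :
    ∫⁻ ω, ∏ j ∈ J, (1 + c * (E j).indicator 1 ω) ∂μ = ∏ j ∈ J, (1 + c * μ (E j)) := by
  have := hE.isProbabilityMeasure
  have hg : Measurable fun x : ℝ≥0∞ => 1 + c * x := by fun_prop
  rw [lintegral_prod_eq_prod_lintegral_of_indepFun J (fun j ω => 1 + c * (E j).indicator 1 ω)
    (hE.iIndepFun_indicator.comp _ fun _ => hg)
    fun j => hg.comp (measurable_one.indicator (hEm j))]
  simp only [lintegral_one_add_mul_indicator (hEm _)]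

theorem one_add_pow_mul_measure_le_card_filter_mem_le [∀ i, DecidablePred (· ∈ E i)]
    (hE : iIndepSet E μ) (hEm : ∀ i, MeasurableSet (E i)) {p : ℝ≥0∞} (J : Finset ι)
    (hp : ∀ j ∈ J, μ (E j) ≤ p) (c : ℝ≥0∞) (k : ℕ) :
    (1 + c) ^ k * μ {ω | k ≤ (J.filter fun j => ω ∈ E j).card} ≤ (1 + c * p) ^ J.card := by
  have hmeas : Measurable fun ω => ∏ j ∈ J, (1 + c * (E j).indicator 1 ω) := by
    refine Finset.measurable_prod J fun j _ => ?_
    exact ((measurable_one.indicator (hEm j)).const_mul c).const_add 1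
  calc (1 + c) ^ k * μ {ω | k ≤ (J.filter fun j => ω ∈ E j).card}
    _ ≤ (1 + c) ^ k * μ {ω | (1 + c) ^ k ≤ ∏ j ∈ J, (1 + c * (E j).indicator 1 ω)} := by
      gcongr with ω
      intro hk
      rw [prod_one_add_mul_indicator]
      exact pow_le_pow_right₀ le_self_add hk
    _ ≤ ∫⁻ ω, ∏ j ∈ J, (1 + c * (E j).indicator 1 ω) ∂μ := mul_meas_ge_le_lintegral hmeas _
    _ = ∏ j ∈ J, (1 + c * μ (E j)) := lintegral_prod_one_add_mul_indicator hE hEm J c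
    _ ≤ (1 + c * p) ^ J.card := by
      refine Finset.prod_le_pow_card J _ _ fun j hj => ?_
      gcongr
      exact hp j hj

theorem iIndepSet_preimage_of_iIndepFun {β : ι → Type*} [∀ i, MeasurableSpace (β i)]
    {X : ∀ i, Ω → β i} (hX : iIndepFun X μ) (hXm : ∀ i, Measurable (X i)) {A : ∀ i, Set (β i)}
    (hA : ∀ i, MeasurableSet (A i)) : iIndepSet (fun i => X i ⁻¹' A i) μ :=
  (iIndepSet_iff_meas_biInter fun i => hXm i (hA i)).2 fun S =>
    hX.measure_inter_preimage_eq_mul S fun i _ => hA i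

theorem two_pow_mul_measure_le_card_filter_mem_le [∀ i, DecidablePred (· ∈ E i)]
    (hE : iIndepSet E μ) (hEm : ∀ i, MeasurableSet (E i)) {n : ℕ} {J : Finset ι}
    (hJ : J.card = 10 * n) (hp : ∀ j ∈ J, μ (E j) ≤ 2⁻¹) (k : ℕ) :
    2 ^ (2 * k) * μ {ω | k ≤ (J.filter fun j => ω ∈ E j).card} ≤ 2 ^ (14 * n) := by
  have hmoment : (1 + 3 * 2⁻¹ : ℝ≥0∞) ^ 10 ≤ 2 ^ 14 := by
    rw [← ENNReal.toReal_le_toReal (by finiteness) (by finiteness), ENNReal.toReal_pow,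
      ENNReal.toReal_add (by finiteness) (by finiteness)]
    norm_num
  calc 2 ^ (2 * k) * μ {ω | k ≤ (J.filter fun j => ω ∈ E j).card}
    _ = (1 + 3) ^ k * μ {ω | k ≤ (J.filter fun j => ω ∈ E j).card} := by
      rw [pow_mul]
      norm_num
    _ ≤ (1 + 3 * 2⁻¹) ^ J.card := one_add_pow_mul_measure_le_card_filter_mem_le hE hEm J hp 3 k
    _ ≤ 2 ^ (14 * n) := by
      rw [hJ, pow_mul, pow_mul]
      gcongr

theorem measure_two_mul_card_filter_notMem_lt_le [∀ i, DecidablePred (· ∈ E i)]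
    (hE : iIndepSet E μ) (hEm : ∀ i, MeasurableSet (E i)) {n : ℕ} {J : Finset ι}
    (hJ : J.card = 10 * n) (hp : ∀ j ∈ J, μ (E j) ≤ 2⁻¹) :
    μ {ω | 2 * (J.filter fun j => ω ∉ E j).card < n} ≤ 32⁻¹ ^ n := by
  have hsub : {ω | 2 * (J.filter fun j => ω ∉ E j).card < n} ⊆
      {ω | 10 * n - n / 2 ≤ (J.filter fun j => ω ∈ E j).card} := by
    intro ω hω
    have hsplit := J.card_filter_add_card_filter_not (fun j => ω ∈ E j)
    simp only [Set.mem_ofPred_eq] at hω ⊢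
    lia
  have hexp : 14 * n + 5 * n ≤ 2 * (10 * n - n / 2) := by lia
  rw [← ENNReal.inv_pow, ENNReal.le_inv_iff_mul_le, mul_comm,
    ← ENNReal.mul_le_mul_iff_right (a := 2 ^ (14 * n)) (by positivity) (by finiteness), mul_one,
    ← mul_assoc]
  calc 2 ^ (14 * n) * 32 ^ n * μ {ω | 2 * (J.filter fun j => ω ∉ E j).card < n}
    _ = 2 ^ (14 * n + 5 * n) * μ {ω | 2 * (J.filter fun j => ω ∉ E j).card < n} := by
      rw [pow_add, pow_mul 2 5]
      norm_num
    _ ≤ 2 ^ (2 * (10 * n - n / 2)) *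
        μ {ω | 10 * n - n / 2 ≤ (J.filter fun j => ω ∈ E j).card} :=
      mul_le_mul' (pow_le_pow_right₀ one_le_two hexp) (measure_mono hsub)
    _ ≤ 2 ^ (14 * n) := two_pow_mul_measure_le_card_filter_mem_le hE hEm hJ hp _

end IndependentEvents

theorem exists_forall_notMem_of_tsum_mul_lt_measure_univ {Ω ι : Type*} [Countable ι]
    [MeasurableSpace Ω] {μ : Measure Ω} {B : ι → ℕ → Set Ω} {N : ι → ℕ} {ε : ι → ℝ≥0∞}
    (hB : ∀ i k, μ (B i k) ≤ ε i) (hε : ∑' i, N i * ε i < μ Set.univ) :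
    ∃ ω, ∀ i, ∀ k < N i, ω ∉ B i k := by
  by_contra! h
  have hcover : ⋃ i, ⋃ k ∈ Finset.range (N i), B i k = Set.univ :=
    Set.eq_univ_of_forall fun ω => by simpa using h ω
  have hrow (i : ι) : μ (⋃ k ∈ Finset.range (N i), B i k) ≤ N i * ε i := by
    refine (measure_biUnion_finset_le _ _).trans ?_
    simpa only [Finset.card_range, nsmul_eq_mul] using
      Finset.sum_le_card_nsmul (Finset.range (N i)) _ _ fun k _ => hB i k
  refine hε.not_ge ?_
  calc μ Set.univ
    _ = μ (⋃ i, ⋃ k ∈ Finset.range (N i), B i k) := by rw [hcover]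
    _ ≤ ∑' i, μ (⋃ k ∈ Finset.range (N i), B i k) := measure_iUnion_le _
    _ ≤ ∑' i, N i * ε i := ENNReal.tsum_le_tsum hrow

theorem exists_isProbabilityMeasure_singleton_le_half (α : Type*) [Nontrivial α]
    [MeasurableSpace α] [MeasurableSingletonClass α] :
    ∃ ν : Measure α, IsProbabilityMeasure ν ∧ ∀ b, ν {b} ≤ 2⁻¹ := by
  classical
  obtain ⟨x, y, hxy⟩ := exists_pair_ne α
  refine ⟨uniformOn ({x, y} : Finset α), isProbabilityMeasure_uniformOn
    (Finset.finite_toSet _) ⟨x, by simp⟩, fun b => ?_⟩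
  rw [← Finset.coe_singleton, uniformOn_apply_finset, Finset.card_pair hxy, ← one_div]
  refine ENNReal.div_le_div_right ?_ _
  exact_mod_cast (Finset.card_le_card Finset.inter_subset_right).trans (Finset.card_singleton b).le

theorem tsum_two_mul_four_pow_mul_inv_pow_lt_one :
    ∑' n : ℕ, (2 * 2 ^ (2 * (n + 1)) : ℕ) * (32⁻¹ : ℝ≥0∞) ^ (n + 1) < 1 := by
  have hratio : (4 * 32⁻¹ : ℝ≥0∞) = 8⁻¹ := by
    rw [← ENNReal.toReal_eq_toReal_iff' (by finiteness) (by finiteness)]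
    norm_num
  have hterm (n : ℕ) : (2 * 2 ^ (2 * (n + 1)) : ℕ) * (32⁻¹ : ℝ≥0∞) ^ (n + 1) =
      2 * 8⁻¹ ^ (n + 1) := by
    rw [← hratio, mul_pow, ← mul_assoc]
    norm_num [pow_mul]
  simp only [hterm, ENNReal.tsum_mul_left, ENNReal.tsum_geometric_add_one]
  have hne : (1 - 8⁻¹ : ℝ≥0∞) ≠ 0 := (tsub_pos_of_lt (by norm_num)).ne'
  rw [← ENNReal.toReal_lt_toReal (by finiteness) (by finiteness)]
  simp only [ENNReal.toReal_mul, ENNReal.toReal_inv]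
  rw [ENNReal.toReal_sub_of_le (by simp) (by finiteness)]
  norm_num

theorem measure_infinitePi_two_mul_card_filter_ne_lt_le {ι α : Type*} [DecidableEq α]
    [MeasurableSpace α] [MeasurableSingletonClass α] {ν : Measure α} [IsProbabilityMeasure ν]
    (hν : ∀ x, ν {x} ≤ 2⁻¹) (b : ι → α) {n : ℕ} {J : Finset ι} (hJ : J.card = 10 * n) :
    Measure.infinitePi (fun _ : ι => ν) {s | 2 * (J.filter fun j => s j ≠ b j).card < n} ≤
      32⁻¹ ^ n := by
  have hletter (j : ι) : MeasurableSet {b j} := measurableSet_singleton _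
  have hcoord (j : ι) : Measurable fun s : ι → α => s j := measurable_pi_apply j
  have hindep : iIndepSet (fun j => {s : ι → α | s j = b j}) (Measure.infinitePi fun _ => ν) :=
    iIndepSet_preimage_of_iIndepFun (A := fun j => {b j})
      (iIndepFun_infinitePi fun _ => measurable_id) hcoord hletter
  refine measure_two_mul_card_filter_notMem_lt_le hindep (fun j => hcoord j (hletter j)) hJ
    fun j _ => ?_
  exact ((measurePreserving_eval_infinitePi (fun _ => ν) j).measure_preimage
    (hletter j).nullMeasurableSet).trans_le (hν _)

theorem far_bitstring_general {α : Type*} [DecidableEq α] [Nontrivial α] (a : ℕ → ℕ → α) :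
    ∃ s : ℕ → α, ∀ n i : ℕ, i < 2 * 2 ^ (2 * n) →
      n ≤ 2 * ((Finset.range (10 * n)).filter fun j => s j ≠ a i j).card := by
  let _ : MeasurableSpace α := ⊤
  obtain ⟨ν, _, hν⟩ := exists_isProbabilityMeasure_singleton_le_half α
  have hclose (n i : ℕ) := measure_infinitePi_two_mul_card_filter_ne_lt_le hν (a i)
    (Finset.card_range (10 * (n + 1)))
  obtain ⟨s, hs⟩ := exists_forall_notMem_of_tsum_mul_lt_measure_univ hclose
    (tsum_two_mul_four_pow_mul_inv_pow_lt_one.trans_eq measure_univ.symm)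
  refine ⟨s, fun n i hi => ?_⟩
  obtain _ | n := n
  · exact Nat.zero_le _
  · exact not_lt.1 (hs n i hi)

/-- far bitstring: there is `n₀ ∈ ℕ`, independent of the sequence, such
that for every sequence `a¹, a², …` of infinite bit vectors (indexed by positive integers)
there is an infinite bit vector `s` whose first `10n` bits have Hamming distance at least
`n/2` from the first `10n` bits of every `aⁱ` with `1 ≤ i ≤ 2·2^{2n}`, for every power of
two `n ≥ n₀`.  Bit `j` of a vector `v` (for `j = 1, …, 10n`) is `v (j-1)`, i.e. the first
`10n` bits are the coordinates in `Finset.range (10n)`; the distance bound `≥ n/2` is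
expressed as `n ≤ 2 · (Hamming distance)`. -/
theorem far_bitstring :
    ∃ n₀ : ℕ, ∀ a : ℕ → (ℕ → Bool), ∃ s : ℕ → Bool,
      ∀ n : ℕ, n₀ ≤ n → (∃ m : ℕ, n = 2 ^ m) →
        ∀ i : ℕ, 1 ≤ i → i ≤ 2 * 2 ^ (2 * n) →
          n ≤ 2 * ((Finset.range (10 * n)).filter fun j => s j ≠ a i j).card := by
  refine ⟨0, fun a => ?_⟩
  obtain ⟨s, hs⟩ := far_bitstring_general fun i => a (i + 1)
  refine ⟨s, fun n _ _ i hi hin => ?_⟩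
  simpa only [Nat.sub_add_cancel hi] using hs n (i - 1) (by lia)
end

section
/- Let n ≥ 2 and suppose the interval [a, b] is partitioned into n consecutive connected regions R₁, …, R_n given by points a = r₀ < r₁ < ⋯ < r_n = b with R_j = [r_{j−1}, r_j], colored alternately: R_j is red if j is odd and blue if j is even. Let m < n − 1 and let a ≤ c₁ ≤ ⋯ ≤ c_m ≤ b be cut points; set c₀ = a and c_{m+1} = b, and let P₁ be the union of the intervals [c_i, c_{i+1}] with i even and P₂ the union of those with i odd (say that a piece P contains a region R_j if the interior of R_j is a subset of P). Then at least one of the following holds: (i) some piece contains both an entire red region and an entire blue region; (ii) both pieces contain an entire region of the same color (i.e., each of P₁ and P₂ contains an entire red region, or each contains an entire blue region). -/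
open Set

/-! Compare cut points and region boundaries index by index. Since `c₀ ≤ r₀` and
`r_{m+1} ≤ c_{m+1}`, the two sequences cross, so that some `[r_i, r_{i+1}]` lies inside
`[c_i, c_{i+1}]`. With at least two regions more than cuts, the same holds for the boundaries
shifted by one: some `[r_{k+1}, r_{k+2}]` lies inside `[c_k, c_{k+1}]`. The regions `R_{i+1}` and
`R_{k+2}` then have different colors exactly when `i` and `k` have the same parity, that is, when
they lie in the same piece. -/

variable {α : Type*}

theorem exists_Icc_succ_subset_Icc_succ [LinearOrder α] {r c : ℕ → α} {m : ℕ}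
    (h_zero : c 0 ≤ r 0) (h_last : r (m + 1) ≤ c (m + 1)) :
    ∃ i ≤ m, Icc (r i) (r (i + 1)) ⊆ Icc (c i) (c (i + 1)) := by
  induction m with
  | zero => exact ⟨0, le_rfl, Icc_subset_Icc h_zero h_last⟩
  | succ m ih =>
    rcases le_total (c (m + 1)) (r (m + 1)) with hcr | hrc
    · exact ⟨m + 1, le_rfl, Icc_subset_Icc hcr h_last⟩
    · obtain ⟨i, hi, hsub⟩ := ih hrc
      exact ⟨i, Nat.le_succ_of_le hi, hsub⟩

/-- The pieces `P₁` (for `s = true`) and `P₂` (for `s = false`) of the alternating partition with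
cut points `c 1, …, c m` of the interval from `c 0` to `c (m + 1)`. Intervals are indexed from `0`,
so `P₁` consists of the even ones. -/
def alternatingPiece [Preorder α] (c : ℕ → α) (m : ℕ) (s : Bool) : Set α :=
  ⋃ i ∈ Finset.range (m + 1), if decide (i % 2 = 0) = s then Icc (c i) (c (i + 1)) else ∅

theorem Icc_subset_alternatingPiece [Preorder α] (c : ℕ → α) {m i : ℕ} {s : Bool} (hi : i ≤ m)
    (hs : Even i ↔ s) : Icc (c i) (c (i + 1)) ⊆ alternatingPiece c m s := by
  intro x hx
  have hs' : decide (i % 2 = 0) = s := by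
    rw [Bool.eq_iff_iff, decide_eq_true_iff, ← Nat.even_iff, hs]
  exact mem_iUnion₂.mpr ⟨i, Finset.mem_range_succ_iff.mpr hi, by rwa [if_pos hs']⟩

theorem alternating_region_too_few_cuts_general [LinearOrder α] {n m : ℕ} {r c : ℕ → α}
    (hr : MonotoneOn r (Iic n)) (hm : m + 1 < n) (h_zero : c 0 ≤ r 0) (h_last : r n ≤ c (m + 1)) :
    (∃ s : Bool, ∃ j j', 1 ≤ j ∧ j ≤ n ∧ 1 ≤ j' ∧ j' ≤ n ∧ Odd j ∧ Even j' ∧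
        Icc (r (j - 1)) (r j) ⊆ alternatingPiece c m s ∧
        Icc (r (j' - 1)) (r j') ⊆ alternatingPiece c m s) ∨
    (∃ j j', 1 ≤ j ∧ j ≤ n ∧ 1 ≤ j' ∧ j' ≤ n ∧ (Odd j ↔ Odd j') ∧
        Icc (r (j - 1)) (r j) ⊆ alternatingPiece c m true ∧
        Icc (r (j' - 1)) (r j') ⊆ alternatingPiece c m false) := by
  have r_le {i j : ℕ} (hij : i ≤ j) (hj : j ≤ n) : r i ≤ r j := hr (hij.trans hj) hj hij
  obtain ⟨i, hi, hri⟩ : ∃ i ≤ m, Icc (r i) (r (i + 1)) ⊆ Icc (c i) (c (i + 1)) :=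
    exists_Icc_succ_subset_Icc_succ h_zero ((r_le hm.le le_rfl).trans h_last)
  obtain ⟨k, hk, hrk⟩ : ∃ k ≤ m, Icc (r (k + 1)) (r (k + 2)) ⊆ Icc (c k) (c (k + 1)) :=
    exists_Icc_succ_subset_Icc_succ (r := fun k => r (k + 1))
      (h_zero.trans (r_le zero_le_one (by omega))) ((r_le hm le_rfl).trans h_last)
  have hri_piece {s : Bool} (hs : Even i ↔ s) :
      Icc (r i) (r (i + 1)) ⊆ alternatingPiece c m s :=
    hri.trans (Icc_subset_alternatingPiece c hi hs)
  have hrk_piece {s : Bool} (hs : Even k ↔ s) :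
      Icc (r (k + 1)) (r (k + 2)) ⊆ alternatingPiece c m s :=
    hrk.trans (Icc_subset_alternatingPiece c hk hs)
  have hi_le : i + 1 ≤ n := by omega
  have hk_le : k + 2 ≤ n := by omega
  rcases Nat.even_or_odd i with hi_even | hi_odd <;>
    rcases Nat.even_or_odd k with hk_even | hk_odd
  · exact .inl ⟨true, i + 1, k + 2, by simp, hi_le, by simp, hk_le,
      hi_even.add_one, hk_even.add even_two, hri_piece (by simpa), hrk_piece (by simpa)⟩
  · exact .inr ⟨i + 1, k + 2, by simp, hi_le, by simp, hk_le,
      iff_of_true hi_even.add_one (hk_odd.add_even even_two),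
      hri_piece (by simpa), hrk_piece (by simpa)⟩
  · exact .inr ⟨k + 2, i + 1, by simp, hk_le, by simp, hi_le,
      iff_of_false (by simpa using hk_even.add even_two) (by simpa using hi_odd.add_one),
      hrk_piece (by simpa), hri_piece (by simpa)⟩
  · exact .inl ⟨false, k + 2, i + 1, by simp, hk_le, by simp, hi_le,
      hk_odd.add_even even_two, hi_odd.add_one, hrk_piece (by simpa), hri_piece (by simpa)⟩

/-- alternating regions with too few cuts: if `[a,b]` is partitioned into
`n ≥ 2` consecutive regions `R_j = [r_{j-1}, r_j]` (red for odd `j`, blue for even `j`) and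
is split by an alternating partition with `m < n - 1` cuts into pieces `P₁` (even-indexed
intervals) and `P₂` (odd-indexed intervals), then either some piece contains (the interior
of) both a red and a blue region, or both pieces contain a region of the same color. -/
theorem alternating_region_too_few_cuts (a b : ℝ) (hab : a < b)
    (n : ℕ) (hn : 2 ≤ n)
    (r : ℕ → ℝ) (hr0 : r 0 = a) (hrn : r n = b)
    (hrmono : ∀ j < n, r j < r (j + 1))
    (m : ℕ) (hm : m < n - 1)
    (c : ℕ → ℝ) (hc0 : c 0 = a) (hcend : c (m + 1) = b)
    (hcmono : ∀ i ≤ m, c i ≤ c (i + 1)) :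
    -- the two pieces of the alternating partition induced by the cuts
    let P : Bool → Set ℝ := fun s =>
      ⋃ i ∈ Finset.range (m + 1),
        if decide (i % 2 = 0) = s then Set.Icc (c i) (c (i + 1)) else (∅ : Set ℝ)
    -- a piece contains region `R_j` if the interior of `R_j` is a subset of the piece
    let contains : Set ℝ → ℕ → Prop := fun S j => Set.Ioo (r (j - 1)) (r j) ⊆ S
    -- (i) some piece contains both a red (odd) and a blue (even) region, or
    -- (ii) both pieces contain a region of the same color
    (∃ s : Bool, ∃ j j', 1 ≤ j ∧ j ≤ n ∧ 1 ≤ j' ∧ j' ≤ n ∧ Odd j ∧ Even j' ∧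
        contains (P s) j ∧ contains (P s) j') ∨
    (∃ j j', 1 ≤ j ∧ j ≤ n ∧ 1 ≤ j' ∧ j' ≤ n ∧ (Odd j ↔ Odd j') ∧
        contains (P true) j ∧ contains (P false) j') := by
  intro P contains
  refine Or.imp ?_ ?_ (alternating_region_too_few_cuts_general
      (strictMonoOn_Iic_of_lt_succ hrmono).monotoneOn (Nat.add_lt_of_lt_sub hm)
      (hc0.trans hr0.symm).le (hrn.trans hcend.symm).le) <;>
    dsimp only [contains, P, alternatingPiece] <;> gcongr <;> exact Ioo_subset_Icc_self
end

section
/- For every integer k ≥ 2: (i) with Alice's value density uniform and Bob's value density σ₀^k, Alice's Stackelberg value in the k-cut game equals 2/3; (ii) for every z ∈ [5/6, 11/12] and w ∈ (0, 1/48], with Alice's value density uniform and Bob's value density σ_{w;z}^k, Alice's Stackelberg value in the k-cut game is at least 2/3 + 4w/(27k). -/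
open MeasureTheory Set

noncomputable section

attribute [local instance] Classical.propDecidable

/-- The value of a piece `S` under density `v`. -/
def pieceVal (v : ℝ → ℝ) (S : Set ℝ) : ℝ := ∫ x in S, v x

/-- Extended cut points: `0, c 0, …, c (k-1), 1`. -/
def extCuts (k : ℕ) (c : Fin k → ℝ) : ℕ → ℝ := fun i =>
  if i = 0 then 0 else if h : i - 1 < k then c ⟨i - 1, h⟩ else 1

/-- A valid vector of `k` cut points: nondecreasing, within `[0,1]`. -/
def ValidCuts (k : ℕ) (c : Fin k → ℝ) : Prop :=
  Monotone c ∧ ∀ i, c i ∈ Set.Icc (0:ℝ) 1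

/-- The two pieces of the alternating partition induced by cuts `c`:
`true` gives the union of even-indexed intervals, `false` the odd-indexed ones. -/
def altPiece (k : ℕ) (c : Fin k → ℝ) (b : Bool) : Set ℝ :=
  ⋃ i ∈ Finset.range (k + 1),
    if decide (i % 2 = 0) = b then Set.Icc (extCuts k c i) (extCuts k c (i + 1)) else ∅

/-- Alice's Stackelberg value with `k` cuts: max of `V_A(Z_A)` over alternating partitions
`(Z_A, Z_B)` induced by `k` cut points with `V_B(Z_B) ≥ 1/2`. -/
def stackelbergValue (k : ℕ) (vA vB : ℝ → ℝ) : ℝ :=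
  sSup { u : ℝ | ∃ (c : Fin k → ℝ) (b : Bool), ValidCuts k c ∧
    1 / 2 ≤ pieceVal vB (altPiece k c (!b)) ∧ u = pieceVal vA (altPiece k c b) }

/-- A history of play: the list of (Alice's cuts, Bob's choice) in past rounds. -/
abbrev Hist (k : ℕ) := List ((Fin k → ℝ) × Bool)

/-- Alice's deterministic strategy: horizon and history ↦ next cut vector. -/
abbrev AliceStrategy (k : ℕ) := ℕ → Hist k → (Fin k → ℝ)

/-- Bob's deterministic strategy: horizon, history, and Alice's current cuts ↦ choice. -/
abbrev BobStrategy (k : ℕ) := ℕ → Hist k → (Fin k → ℝ) → Bool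

/-- The history of play after `t` rounds. -/
def playHist (k : ℕ) (SA : AliceStrategy k) (SB : BobStrategy k) (T : ℕ) : ℕ → Hist k
  | 0 => []
  | t + 1 =>
      let h := playHist k SA SB T t
      let cuts := SA T h
      h ++ [(cuts, SB T h cuts)]

/-- Alice's cuts in round `t` (0-indexed). -/
def roundCuts (k : ℕ) (SA : AliceStrategy k) (SB : BobStrategy k) (T t : ℕ) : Fin k → ℝ :=
  SA T (playHist k SA SB T t)

/-- Bob's choice in round `t` (0-indexed). -/
def roundChoice (k : ℕ) (SA : AliceStrategy k) (SB : BobStrategy k) (T t : ℕ) : Bool :=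
  SB T (playHist k SA SB T t) (roundCuts k SA SB T t)

/-- Alice's Stackelberg regret over horizon `T`: in each round she receives the value of
the piece Bob did not choose. -/
def aliceRegret (k : ℕ) (vA vB : ℝ → ℝ) (SA : AliceStrategy k) (SB : BobStrategy k)
    (T : ℕ) : ℝ :=
  ∑ t ∈ Finset.range T,
    (stackelbergValue k vA vB -
      pieceVal vA (altPiece k (roundCuts k SA SB T t) (!(roundChoice k SA SB T t))))

/-- Bob's regret over horizon `T` relative to always choosing his preferred piece. -/
def bobRegret (k : ℕ) (vB : ℝ → ℝ) (SA : AliceStrategy k) (SB : BobStrategy k) (T : ℕ) : ℝ :=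
  ∑ t ∈ Finset.range T,
    (max (pieceVal vB (altPiece k (roundCuts k SA SB T t) true))
        (pieceVal vB (altPiece k (roundCuts k SA SB T t) false)) -
      pieceVal vB (altPiece k (roundCuts k SA SB T t) (roundChoice k SA SB T t)))

/-- Bob's strategy guarantees regret at most `R T` against every Alice strategy and horizon. -/
def BobGuarantees (k : ℕ) (vB : ℝ → ℝ) (SB : BobStrategy k) (R : ℕ → ℝ) : Prop :=
  ∀ (SA : AliceStrategy k) (T : ℕ), bobRegret k vB SA SB T ≤ R T

/-- The myopic Bob: chooses the piece of larger `V_B`-value, breaking ties towards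
the piece of smaller `V_A`-value. -/
def myopicBob (k : ℕ) (vA vB : ℝ → ℝ) : BobStrategy k := fun _ _ c =>
  if pieceVal vB (altPiece k c false) < pieceVal vB (altPiece k c true) then true
  else if pieceVal vB (altPiece k c true) < pieceVal vB (altPiece k c false) then false
  else if pieceVal vA (altPiece k c true) ≤ pieceVal vA (altPiece k c false) then true
  else false

/-- Alice's strategy always produces valid cut vectors. -/
def AliceValid (k : ℕ) (SA : AliceStrategy k) : Prop := ∀ T h, ValidCuts k (SA T h)

/-- The common length of the high-value intervals: `ℓ^k = 1/(3(⌊k/2⌋ + 1/2))`. -/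
def ell (k : ℕ) : ℝ := 1 / (3 * ((k / 2 : ℕ) + 1 / 2))

/-- The number of high-value intervals: `⌊k/2⌋ + 1`. -/
def nHigh (k : ℕ) : ℕ := k / 2 + 1

/-- The number of low-value intervals: `⌈k/2⌉`. -/
def nLow (k : ℕ) : ℕ := (k + 1) / 2

/-- The common length of the low-value intervals. -/
def lowLen (k : ℕ) : ℝ := (1 - nHigh k * ell k) / nLow k

/-- Left endpoint of the `j`-th interval (0-indexed; the intervals alternate
high, low, high, …, starting with a high-value interval). -/
def bd (k : ℕ) (j : ℕ) : ℝ := ((j + 1) / 2 : ℕ) * ell k + (j / 2 : ℕ) * lowLen k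

/-- The union `H^k` of the high-value intervals (even-indexed). -/
def Hset (k : ℕ) : Set ℝ :=
  ⋃ j ∈ Finset.range (k + 1),
    if j % 2 = 0 then Set.Icc (bd k j) (bd k (j + 1)) else ∅

/-- The union `L^k` of the (interiors of the) low-value intervals (odd-indexed). -/
def Lset (k : ℕ) : Set ℝ :=
  ⋃ j ∈ Finset.range (k + 1),
    if j % 2 = 1 then Set.Ioo (bd k j) (bd k (j + 1)) else ∅

/-- The density of the low-value region: `(1 - (3/2)μ(H^k))/μ(L^k)`. -/
def lowDens (k : ℕ) : ℝ :=
  (1 - 3 / 2 * (volume (Hset k)).toReal) / (volume (Lset k)).toReal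

/-- The unspiked value density `σ₀^k`: `3/2` on `H^k`, `lowDens k` elsewhere. -/
def sigma0 (k : ℕ) : ℝ → ℝ := fun x => if x ∈ Hset k then 3 / 2 else lowDens k

/-- The spiked value density `σ_{w;z}^k`: equal to `2` for `x/ℓ^k ∈ (z-w, z]`, to `1` for
`x/ℓ^k ∈ (z, z+w)`, and to `σ₀^k(x)` otherwise. -/
def sigmaSpike (k : ℕ) (w z : ℝ) : ℝ → ℝ := fun x =>
  if x / ell k ∈ Set.Ioc (z - w) z then 2
  else if x / ell k ∈ Set.Ioo z (z + w) then 1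
  else sigma0 k x

/-!
Bob's unspiked density never exceeds `3/2`, so he must receive length at least `1/3`. As
`⌊k/2⌋ + 1/2` high-value intervals have exactly that length, Alice gives him all of them except half
of the first one, which takes at most `k` cuts. Against the spiked density she gives him `[0, zℓ]`
instead of `[0, ℓ/2]`: the left half of the spike makes this worth `wℓ/2` more than it is at density
`3/2`, so from the beginning of the second high-value interval she can take back a length exceeding
`(z - 1/2)ℓ` by `wℓ/3`.
-/

lemma sum_range_filter_even {M : Type*} [AddCommMonoid M] (g : ℕ → M) (n : ℕ) :
    ∑ i ∈ Finset.range n with i % 2 = 0, g i = ∑ j ∈ Finset.range ((n + 1) / 2), g (2 * j) := by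
  refine Finset.sum_nbij' (· / 2) (2 * ·) ?_ ?_ ?_ ?_ ?_ <;>
    simp only [Finset.mem_filter, Finset.mem_range]
  · omega
  · omega
  · omega
  · omega
  · intro i hi
    rw [Nat.mul_div_cancel' (Nat.dvd_of_mod_eq_zero hi.2)]

lemma monotone_update_succ {α : Type*} [Preorder α] {e : ℕ → α} (he : Monotone e) {n : ℕ} {a : α}
    (hna : e n ≤ a) (han : a ≤ e (n + 2)) : Monotone (Function.update e (n + 1) a) := by
  refine monotone_nat_of_le_succ fun i => ?_
  rcases eq_or_ne i n with rfl | hi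
  · simpa using hna
  rcases eq_or_ne i (n + 1) with rfl | hi'
  · simpa using han
  rw [Function.update_of_ne hi', Function.update_of_ne (by omega)]
  exact he i.le_succ

lemma intervalIntegral_eq_mul_of_forall_mem_Ioo {f : ℝ → ℝ} {a b C : ℝ} (hab : a ≤ b)
    (hf : ∀ x ∈ Ioo a b, f x = C) : ∫ x in a..b, f x = C * (b - a) := by
  rw [intervalIntegral.integral_congr_Ioo_of_le hab (g := fun _ => C) hf]
  simp [mul_comm]

lemma setIntegral_biUnion_Icc_succ {E : Type*} [NormedAddCommGroup E] [NormedSpace ℝ E]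
    {μ : Measure ℝ} [NullSingletonClass μ] {e : ℕ → ℝ} (he : Monotone e) (s : Finset ℕ) {f : ℝ → E}
    (hf : ∀ i ∈ s, IntegrableOn f (Icc (e i) (e (i + 1))) μ) :
    ∫ x in ⋃ i ∈ s, Icc (e i) (e (i + 1)), f x ∂μ = ∑ i ∈ s, ∫ x in e i..e (i + 1), f x ∂μ := by
  have hae : (⋃ i ∈ s, Ioc (e i) (e (i + 1))) =ᵐ[μ] ⋃ i ∈ s, Icc (e i) (e (i + 1)) :=
    s.eventuallyEq_iUnion fun i _ => Ioc_ae_eq_Icc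
  have hdisj : Pairwise (Function.onFun Disjoint fun i => Ioc (e i) (e (i + 1))) :=
    he.pairwise_disjoint_on_Ioc_succ
  rw [← setIntegral_congr_set hae, integral_biUnion_finset s (fun _ _ => measurableSet_Ioc)
    (hdisj.set_pairwise _) fun i hi => (hf i hi).mono_set Ioc_subset_Icc_self]
  exact Finset.sum_congr rfl fun i _ =>
    (intervalIntegral.integral_of_le (he i.le_succ)).symm

section Cuts

variable {k : ℕ} {c : Fin k → ℝ}

lemma extCuts_zero (c : Fin k → ℝ) : extCuts k c 0 = 0 := if_pos rfl

lemma extCuts_add_one_self (c : Fin k → ℝ) : extCuts k c (k + 1) = 1 := by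
  simp [extCuts]

lemma extCuts_comp_succ {e : ℕ → ℝ} (h₀ : e 0 = 0) (h₁ : e (k + 1) = 1) {i : ℕ} (hi : i ≤ k + 1) :
    extCuts k (fun j => e (j + 1)) i = e i := by
  rcases i with _ | i
  · rw [extCuts_zero, h₀]
  rcases (Nat.le_of_succ_le_succ hi).eq_or_lt with rfl | hik
  · rw [extCuts_add_one_self, h₁]
  · simp [extCuts, hik]

lemma ValidCuts.comp_succ {e : ℕ → ℝ} (he : Monotone e) (h₀ : e 0 = 0) (h₁ : e (k + 1) = 1) :
    ValidCuts k fun j => e (j + 1) :=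
  ⟨fun _ _ hij => he (Nat.succ_le_succ hij), fun j =>
    ⟨h₀.symm.trans_le (he (Nat.zero_le _)), (he (Nat.succ_le_succ j.is_le')).trans_eq h₁⟩⟩

namespace ValidCuts

lemma monotone_extCuts (hc : ValidCuts k c) : Monotone (extCuts k c) := by
  refine monotone_nat_of_le_succ fun i => ?_
  rcases i with _ | i
  · rcases k.eq_zero_or_pos with rfl | hk
    · simp [extCuts]
    · simpa [extCuts, hk] using (hc.2 ⟨0, hk⟩).1
  rcases lt_trichotomy (i + 1) k with hi | rfl | hi
  · simpa [extCuts, hi, (Nat.lt_succ_self i).trans hi] using hc.1 (by simp)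
  · simpa [extCuts] using (hc.2 ⟨i, i.lt_succ_self⟩).2
  · simp [extCuts, hi.not_gt, (Nat.le_of_lt_succ hi).not_gt]

lemma Icc_extCuts_subset (hc : ValidCuts k c) {i : ℕ} (hi : i ≤ k) :
    Icc (extCuts k c i) (extCuts k c (i + 1)) ⊆ Icc 0 1 := by
  refine Icc_subset_Icc ?_ ?_
  · exact (extCuts_zero c).symm.trans_le (hc.monotone_extCuts i.zero_le)
  · exact (hc.monotone_extCuts (Nat.succ_le_succ hi)).trans_eq (extCuts_add_one_self c)

end ValidCuts

lemma altPiece_eq_biUnion_filter (c : Fin k → ℝ) (b : Bool) :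
    altPiece k c b = ⋃ i ∈ {i ∈ Finset.range (k + 1) | decide (i % 2 = 0) = b},
      Icc (extCuts k c i) (extCuts k c (i + 1)) := by
  ext x
  simp only [altPiece, mem_iUnion, mem_ite_empty_right, Finset.mem_filter, exists_prop, and_assoc]

lemma measurableSet_altPiece (c : Fin k → ℝ) (b : Bool) : MeasurableSet (altPiece k c b) := by
  rw [altPiece_eq_biUnion_filter]
  exact Finset.measurableSet_biUnion _ fun _ _ => measurableSet_Icc

lemma ValidCuts.altPiece_subset (hc : ValidCuts k c) (b : Bool) : altPiece k c b ⊆ Icc 0 1 := by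
  rw [altPiece_eq_biUnion_filter]
  refine iUnion₂_subset fun i hi => hc.Icc_extCuts_subset ?_
  exact Nat.le_of_lt_succ (Finset.mem_range.1 (Finset.mem_filter.1 hi).1)

lemma pieceVal_altPiece (hc : ValidCuts k c) {v : ℝ → ℝ} (hv : IntegrableOn v (Icc 0 1))
    (b : Bool) :
    pieceVal v (altPiece k c b) = ∑ i ∈ Finset.range (k + 1) with decide (i % 2 = 0) = b,
      ∫ x in extCuts k c i..extCuts k c (i + 1), v x := by
  rw [pieceVal, altPiece_eq_biUnion_filter]
  refine setIntegral_biUnion_Icc_succ hc.monotone_extCuts _ fun i hi =>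
    hv.mono_set (hc.Icc_extCuts_subset ?_)
  exact Nat.le_of_lt_succ (Finset.mem_range.1 (Finset.mem_filter.1 hi).1)

lemma pieceVal_altPiece_add_not (hc : ValidCuts k c) {v : ℝ → ℝ} (hv : IntegrableOn v (Icc 0 1))
    (b : Bool) :
    pieceVal v (altPiece k c b) + pieceVal v (altPiece k c (!b)) = ∫ x in (0)..1, v x := by
  have hint : ∀ i < k + 1,
      IntervalIntegrable v volume (extCuts k c i) (extCuts k c (i + 1)) := fun i hi =>
    (intervalIntegrable_iff_integrableOn_Icc_of_le (hc.monotone_extCuts i.le_succ)).2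
      (hv.mono_set (hc.Icc_extCuts_subset (Nat.le_of_lt_succ hi)))
  rw [pieceVal_altPiece hc hv, pieceVal_altPiece hc hv]
  simp only [Bool.eq_not]
  rw [Finset.sum_filter_add_sum_filter_not, intervalIntegral.sum_integral_adjacent_intervals hint,
    extCuts_zero, extCuts_add_one_self]

lemma pieceVal_altPiece_comp_succ {e : ℕ → ℝ} (he : Monotone e) (h₀ : e 0 = 0) (h₁ : e (k + 1) = 1)
    {v : ℝ → ℝ} (hv : IntegrableOn v (Icc 0 1)) :
    pieceVal v (altPiece k (fun j => e (j + 1)) true) =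
      ∑ j ∈ Finset.range (k / 2 + 1), ∫ x in e (2 * j)..e (2 * j + 1), v x := by
  rw [pieceVal_altPiece (.comp_succ he h₀ h₁) hv]
  simp only [decide_eq_true_eq]
  rw [sum_range_filter_even, show (k + 1 + 1) / 2 = k / 2 + 1 by omega]
  refine Finset.sum_congr rfl fun j hj => ?_
  have hjk := Finset.mem_range.1 hj
  rw [extCuts_comp_succ h₀ h₁ (by omega), extCuts_comp_succ h₀ h₁ (by omega)]

end Cuts

/-- The payoffs `V_A(Z_A)` Alice can obtain from alternating partitions with `V_B(Z_B) ≥ 1/2`; their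
supremum is `stackelbergValue`. -/
def stackelbergPayoffs (k : ℕ) (vA vB : ℝ → ℝ) : Set ℝ :=
  {u : ℝ | ∃ (c : Fin k → ℝ) (b : Bool), ValidCuts k c ∧
    1 / 2 ≤ pieceVal vB (altPiece k c (!b)) ∧ u = pieceVal vA (altPiece k c b)}

section Payoffs

variable {k : ℕ} {vA vB : ℝ → ℝ}

lemma mem_upperBounds_stackelbergPayoffs (hA : IntegrableOn vA (Icc 0 1))
    (hB : IntegrableOn vB (Icc 0 1)) {M : ℝ} (hM : 0 < M) (hAB : ∀ x ∈ Icc 0 1, vB x ≤ M * vA x) :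
    (∫ x in (0)..1, vA x) - 1 / (2 * M) ∈ upperBounds (stackelbergPayoffs k vA vB) := by
  rintro _ ⟨c, b, hc, hhalf, rfl⟩
  have hsub := hc.altPiece_subset !b
  have hle : pieceVal vB (altPiece k c (!b)) ≤ M * pieceVal vA (altPiece k c (!b)) := by
    rw [pieceVal, pieceVal, ← integral_const_mul]
    exact setIntegral_mono_on (hB.mono_set hsub) ((hA.mono_set hsub).const_mul M)
      (measurableSet_altPiece c _) fun x hx => hAB x (hsub hx)
  have hbob : 1 / (2 * M) ≤ pieceVal vA (altPiece k c (!b)) := by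
    rw [div_le_iff₀ (by positivity)]
    linarith
  linarith [pieceVal_altPiece_add_not hc hA b]

lemma integral_sub_sum_mem_stackelbergPayoffs (hA : IntegrableOn vA (Icc 0 1))
    (hB : IntegrableOn vB (Icc 0 1)) {e : ℕ → ℝ} (he : Monotone e) (h₀ : e 0 = 0)
    (h₁ : e (k + 1) = 1)
    (hhalf : 1 / 2 ≤ ∑ j ∈ Finset.range (k / 2 + 1), ∫ x in e (2 * j)..e (2 * j + 1), vB x) :
    (∫ x in (0)..1, vA x) - ∑ j ∈ Finset.range (k / 2 + 1), ∫ x in e (2 * j)..e (2 * j + 1), vA x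
      ∈ stackelbergPayoffs k vA vB := by
  have hc : ValidCuts k fun j => e (j + 1) := .comp_succ he h₀ h₁
  refine ⟨_, false, hc, hhalf.trans_eq (pieceVal_altPiece_comp_succ he h₀ h₁ hB).symm, ?_⟩
  rw [← pieceVal_altPiece_comp_succ he h₀ h₁ hA, ← pieceVal_altPiece_add_not hc hA false]
  exact add_sub_cancel_right _ _

end Payoffs

section Intervals

variable (k : ℕ)

lemma ell_pos : 0 < ell k := by
  unfold ell
  positivity

lemma half_add_mul_ell : ((k / 2 : ℕ) + 1 / 2) * ell k = 1 / 3 := by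
  unfold ell
  field_simp

lemma four_mul_div_le_ell_mul_div (hk : 2 ≤ k) {w : ℝ} (hw : 0 ≤ w) :
    4 * w / (27 * k) ≤ ell k * w / 3 := by
  have hkm : (2 : ℝ) * (k / 2 : ℕ) ≤ k := by exact_mod_cast Nat.mul_div_le k 2
  have hk' : (2 : ℝ) ≤ k := by exact_mod_cast hk
  calc 4 * w / (27 * k) = 4 / (27 * k) * w := by ring
    _ ≤ ell k / 3 * w := by
        refine mul_le_mul_of_nonneg_right ?_ hw
        rw [ell, div_div, div_le_div_iff₀ (by positivity) (by positivity)]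
        linarith
    _ = ell k * w / 3 := by ring

lemma lowLen_nonneg : 0 ≤ lowLen k := by
  refine div_nonneg ?_ (Nat.cast_nonneg _)
  have hm : 0 ≤ ((k / 2 : ℕ) : ℝ) * ell k := mul_nonneg (Nat.cast_nonneg _) (ell_pos k).le
  rw [nHigh]
  push_cast
  linarith [half_add_mul_ell k]

lemma monotone_bd : Monotone (bd k) := by
  intro i j hij
  have hell := (ell_pos k).le
  have hlow := lowLen_nonneg k
  unfold bd
  gcongr

lemma bd_zero : bd k 0 = 0 := by simp [bd]

lemma bd_one : bd k 1 = ell k := by simp [bd]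

lemma bd_two_mul_add_one (j : ℕ) : bd k (2 * j + 1) = bd k (2 * j) + ell k := by
  rw [bd, bd, show (2 * j + 1 + 1) / 2 = j + 1 by omega, show (2 * j + 1) / 2 = j by omega,
    show 2 * j / 2 = j by omega]
  push_cast
  ring

variable {k}

lemma bd_add_one_self (hk : 1 ≤ k) : bd k (k + 1) = 1 := by
  have hlow : (nLow k : ℝ) ≠ 0 := by
    rw [nLow]
    exact_mod_cast (by omega : (k + 1) / 2 ≠ 0)
  have hhigh : (k + 1 + 1) / 2 = nHigh k := by
    rw [nHigh]
    omega
  rw [bd, hhigh, ← nLow, lowLen]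
  field_simp
  ring

lemma Icc_bd_subset_Hset {j : ℕ} (hj : j ≤ k / 2) :
    Icc (bd k (2 * j)) (bd k (2 * j + 1)) ⊆ Hset k := by
  intro x hx
  refine mem_biUnion (Finset.mem_coe.2 (Finset.mem_range.2 (by omega : 2 * j < k + 1))) ?_
  rwa [if_pos (Nat.mul_mod_right 2 j)]

variable (k)

lemma measurableSet_Hset : MeasurableSet (Hset k) := by
  refine Finset.measurableSet_biUnion _ fun j _ => ?_
  split_ifs
  exacts [measurableSet_Icc, .empty]

lemma volume_Hset_ne_top : volume (Hset k) ≠ ⊤ := by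
  refine (measure_biUnion_lt_top (Finset.finite_toSet _) fun j _ => ?_).ne
  split_ifs <;> simp

lemma volume_Lset_ne_top : volume (Lset k) ≠ ⊤ := by
  refine (measure_biUnion_lt_top (Finset.finite_toSet _) fun j _ => ?_).ne
  split_ifs <;> simp

variable {k}

lemma biUnion_Ioo_bd_subset :
    ⋃ j ∈ Finset.range (k + 1), Ioo (bd k j) (bd k (j + 1)) ⊆ Hset k ∪ Lset k := by
  refine iUnion₂_subset fun j hj => ?_
  rcases Nat.mod_two_eq_zero_or_one j with hpar | hpar
  · refine subset_union_of_subset_left (subset_trans ?_ (subset_biUnion_of_mem hj)) _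
    rw [if_pos hpar]
    exact Ioo_subset_Icc_self
  · refine subset_union_of_subset_right (subset_trans ?_ (subset_biUnion_of_mem hj)) _
    rw [if_pos hpar]

lemma one_le_volume_Hset_add_volume_Lset (hk : 1 ≤ k) :
    1 ≤ volume.real (Hset k) + volume.real (Lset k) := by
  have hae : (⋃ j ∈ Finset.range (k + 1), Ioo (bd k j) (bd k (j + 1))) =ᵐ[volume] Ioc 0 1 := by
    have hcover := (monotone_bd k).biUnion_Ico_Ioc_map_succ 0 (k + 1)
    rw [bd_zero, bd_add_one_self hk] at hcover
    rw [← hcover]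
    simpa using (Finset.range (k + 1)).eventuallyEq_iUnion fun _ _ => Ioo_ae_eq_Ioc
  calc 1 = volume.real (Ioc (0 : ℝ) 1) := by simp
    _ = volume.real (⋃ j ∈ Finset.range (k + 1), Ioo (bd k j) (bd k (j + 1))) :=
        (measureReal_congr hae).symm
    _ ≤ volume.real (Hset k ∪ Lset k) := measureReal_mono biUnion_Ioo_bd_subset
        (measure_union_ne_top (volume_Hset_ne_top k) (volume_Lset_ne_top k))
    _ ≤ volume.real (Hset k) + volume.real (Lset k) := measureReal_union_le _ _

end Intervals

section Densities

variable {k : ℕ}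

lemma lowDens_le (hk : 1 ≤ k) : lowDens k ≤ 3 / 2 := by
  have hvol := one_le_volume_Hset_add_volume_Lset hk
  simp only [measureReal_def] at hvol
  refine div_le_of_le_mul₀ ENNReal.toReal_nonneg (by norm_num) ?_
  linarith

lemma sigma0_le (hk : 1 ≤ k) (x : ℝ) : sigma0 k x ≤ 3 / 2 := by
  unfold sigma0
  split_ifs
  exacts [le_rfl, lowDens_le hk]

lemma sigmaSpike_le (hk : 1 ≤ k) (w z x : ℝ) : sigmaSpike k w z x ≤ 2 := by
  unfold sigmaSpike
  split_ifs
  · exact le_rfl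
  · norm_num
  · linarith [sigma0_le hk x]

lemma integrable_sigma0 {μ : Measure ℝ} [IsFiniteMeasure μ] (k : ℕ) : Integrable (sigma0 k) μ :=
  Integrable.piecewise (measurableSet_Hset k) (integrable_const _) (integrable_const _)

lemma integrable_sigmaSpike {μ : Measure ℝ} [IsFiniteMeasure μ] (k : ℕ) (w z : ℝ) :
    Integrable (sigmaSpike k w z) μ := by
  have hdiv : Measurable fun x : ℝ => x / ell k := measurable_id.div_const _
  have hpiece : sigmaSpike k w z = ((· / ell k) ⁻¹' Ioc (z - w) z).piecewise (fun _ => 2)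
      (((· / ell k) ⁻¹' Ioo z (z + w)).piecewise (fun _ => 1) (sigma0 k)) := by
    ext x
    simp only [sigmaSpike, piecewise, mem_preimage]
  rw [hpiece]
  exact .piecewise (hdiv measurableSet_Ioc) (integrable_const _).integrableOn
    (Integrable.piecewise (hdiv measurableSet_Ioo) (integrable_const _).integrableOn
      (integrable_sigma0 k).integrableOn).integrableOn

lemma sigmaSpike_of_le {w z x : ℝ} (hw : 0 ≤ w) (hx : x ≤ (z - w) * ell k) :
    sigmaSpike k w z x = sigma0 k x := by
  have hdiv : x / ell k ≤ z - w := (div_le_iff₀ (ell_pos k)).2 hx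
  rw [sigmaSpike, if_neg fun h => hdiv.not_gt h.1, if_neg fun h => by linarith [h.1]]

lemma sigmaSpike_of_lt {w z x : ℝ} (hw : 0 ≤ w) (hx : (z + w) * ell k < x) :
    sigmaSpike k w z x = sigma0 k x := by
  have hdiv : z + w < x / ell k := (lt_div_iff₀ (ell_pos k)).2 hx
  rw [sigmaSpike, if_neg fun h => by linarith [h.2], if_neg fun h => hdiv.not_gt h.2]

lemma sigmaSpike_of_mem_Ioc {w z x : ℝ} (hx : x ∈ Ioc ((z - w) * ell k) (z * ell k)) :
    sigmaSpike k w z x = 2 :=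
  if_pos ⟨(lt_div_iff₀ (ell_pos k)).2 hx.1, (div_le_iff₀ (ell_pos k)).2 hx.2⟩

lemma sigma0_of_mem_Icc_bd {j : ℕ} (hj : j ≤ k / 2) {x : ℝ}
    (hx : x ∈ Icc (bd k (2 * j)) (bd k (2 * j + 1))) : sigma0 k x = 3 / 2 :=
  if_pos (Icc_bd_subset_Hset hj hx)

lemma sigma0_of_mem_Icc_ell {x : ℝ} (hx : x ∈ Icc 0 (ell k)) : sigma0 k x = 3 / 2 := by
  rw [← bd_zero k, ← bd_one k] at hx
  exact sigma0_of_mem_Icc_bd (Nat.zero_le _) hx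

lemma integral_sigma0 {j : ℕ} (hj : j ≤ k / 2) {a b : ℝ} (ha : bd k (2 * j) ≤ a) (hab : a ≤ b)
    (hb : b ≤ bd k (2 * j + 1)) : ∫ x in a..b, sigma0 k x = 3 / 2 * (b - a) :=
  intervalIntegral_eq_mul_of_forall_mem_Ioo hab fun _ hx =>
    sigma0_of_mem_Icc_bd hj ⟨ha.trans hx.1.le, hx.2.le.trans hb⟩

lemma integral_sigmaSpike_of_one_le {w z : ℝ} (hw : 0 ≤ w) (hzw : z + w ≤ 1) {j : ℕ} (hj₁ : 1 ≤ j)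
    (hj : j ≤ k / 2) {a b : ℝ} (ha : bd k (2 * j) ≤ a) (hab : a ≤ b)
    (hb : b ≤ bd k (2 * j + 1)) : ∫ x in a..b, sigmaSpike k w z x = 3 / 2 * (b - a) := by
  rw [← integral_sigma0 hj ha hab hb]
  refine intervalIntegral.integral_congr_Ioo_of_le hab fun x hx => sigmaSpike_of_lt hw ?_
  calc (z + w) * ell k ≤ ell k := mul_le_of_le_one_left (ell_pos k).le hzw
    _ = bd k 1 := (bd_one k).symm
    _ ≤ bd k (2 * j) := monotone_bd k (by omega)
    _ < x := ha.trans_lt hx.1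

lemma integral_sigmaSpike_zero_mul_ell {w z : ℝ} (hw : 0 ≤ w) (hwz : w ≤ z) (hz : z ≤ 1) :
    ∫ x in (0)..z * ell k, sigmaSpike k w z x = (3 / 2 * z + w / 2) * ell k := by
  have hell := ell_pos k
  have hint (a b : ℝ) : IntervalIntegrable (sigmaSpike k w z) volume a b :=
    ⟨integrable_sigmaSpike k w z, integrable_sigmaSpike k w z⟩
  have hbefore : ∫ x in (0)..(z - w) * ell k, sigmaSpike k w z x =
      3 / 2 * ((z - w) * ell k - 0) :=
    intervalIntegral_eq_mul_of_forall_mem_Ioo (mul_nonneg (sub_nonneg.2 hwz) hell.le) fun x hx => by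
      rw [sigmaSpike_of_le hw hx.2.le]
      exact sigma0_of_mem_Icc_ell ⟨hx.1.le, by nlinarith [hx.2]⟩
  have hspike : ∫ x in (z - w) * ell k..z * ell k, sigmaSpike k w z x =
      2 * (z * ell k - (z - w) * ell k) :=
    intervalIntegral_eq_mul_of_forall_mem_Ioo (by gcongr; linarith) fun x hx =>
      sigmaSpike_of_mem_Ioc (Ioo_subset_Ioc_self hx)
  rw [← intervalIntegral.integral_add_adjacent_intervals (hint _ _) (hint _ _), hbefore, hspike]
  ring

end Densities

/-- Alice's cuts: the end points `bd k` of the high- and low-value intervals, except that Bob is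
left with the initial fraction `a` of the first high-value interval and the final fraction `1 - t`
of the second one. For `k = 1` there is no second one, and the sequence ends at `1` only if
`t = 0`. -/
def trimmedBd (k : ℕ) (a t : ℝ) : ℕ → ℝ :=
  Function.update (Function.update (bd k) 1 (a * ell k)) 2 (bd k 2 + t * ell k)

section TrimmedBd

variable {k : ℕ} {a t : ℝ}

lemma trimmedBd_one : trimmedBd k a t 1 = a * ell k := by
  simp [trimmedBd]

lemma trimmedBd_two : trimmedBd k a t 2 = bd k 2 + t * ell k := by
  simp [trimmedBd]

lemma trimmedBd_of_ne {i : ℕ} (h₁ : i ≠ 1) (h₂ : i ≠ 2) : trimmedBd k a t i = bd k i := by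
  simp [trimmedBd, h₁, h₂]

lemma trimmedBd_zero : trimmedBd k a t 0 = 0 := by
  rw [trimmedBd_of_ne (by simp) (by simp), bd_zero]

lemma trimmedBd_add_one_self (hk : 1 ≤ k) (hkt : 2 ≤ k ∨ t = 0) : trimmedBd k a t (k + 1) = 1 := by
  rw [← bd_add_one_self hk]
  rcases hkt with hk₂ | rfl
  · exact trimmedBd_of_ne (by omega) (by omega)
  · rcases hk.eq_or_lt with rfl | hk₂
    · simp [trimmedBd_two]
    · exact trimmedBd_of_ne (by omega) (by omega)

lemma monotone_trimmedBd (ha : a ∈ Icc 0 1) (ht : t ∈ Icc 0 1) : Monotone (trimmedBd k a t) := by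
  have hell := ell_pos k
  have haell : a * ell k ≤ bd k 2 := calc
    a * ell k ≤ bd k 1 := by simpa [bd_one] using mul_le_of_le_one_left hell.le ha.2
    _ ≤ bd k 2 := monotone_bd k one_le_two
  have hnonneg : 0 ≤ t * ell k := mul_nonneg ht.1 hell.le
  refine monotone_update_succ (monotone_update_succ (monotone_bd k) ?_ haell) ?_ ?_
  · rw [bd_zero]
    exact mul_nonneg ha.1 hell.le
  · rw [Function.update_self]
    linarith
  · rw [Function.update_of_ne (by simp), bd_two_mul_add_one k 1]
    linarith [mul_le_of_le_one_left hell.le ht.2]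

lemma bd_two_mul_le_trimmedBd (ht : 0 ≤ t) (j : ℕ) : bd k (2 * j) ≤ trimmedBd k a t (2 * j) := by
  rcases eq_or_ne j 1 with rfl | hj
  · simpa [trimmedBd_two] using mul_nonneg ht (ell_pos k).le
  · rw [trimmedBd_of_ne (by omega) (by omega)]

lemma trimmedBd_two_mul_add_one_le (ha : a ≤ 1) (j : ℕ) :
    trimmedBd k a t (2 * j + 1) ≤ bd k (2 * j + 1) := by
  rcases eq_or_ne j 0 with rfl | hj
  · simpa [trimmedBd_one, bd_one] using mul_le_of_le_one_left (ell_pos k).le ha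
  · rw [trimmedBd_of_ne (by omega) (by omega)]

lemma trimmedBd_sub (j : ℕ) :
    trimmedBd k a t (2 * j + 1) - trimmedBd k a t (2 * j) =
      ell k - (if j = 0 then (1 - a) * ell k else 0) - if j = 1 then t * ell k else 0 := by
  rcases j with _ | _ | j
  · rw [mul_zero, zero_add, trimmedBd_one, trimmedBd_zero, if_pos rfl, if_neg zero_ne_one]
    ring
  · rw [trimmedBd_of_ne (by simp) (by simp), bd_two_mul_add_one, zero_add, mul_one, trimmedBd_two,
      if_neg one_ne_zero, if_pos rfl]
    ring
  · rw [trimmedBd_of_ne (by omega) (by omega), trimmedBd_of_ne (by omega) (by omega),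
      bd_two_mul_add_one]
    simp

lemma sum_trimmedBd_sub (hkt : 2 ≤ k ∨ t = 0) :
    ∑ j ∈ Finset.range (k / 2 + 1), (trimmedBd k a t (2 * j + 1) - trimmedBd k a t (2 * j)) =
      ((k / 2 : ℕ) + a - t) * ell k := by
  simp only [trimmedBd_sub, Finset.sum_sub_distrib, Finset.sum_const, Finset.card_range,
    Finset.sum_ite_eq', Finset.mem_range, Nat.succ_pos, if_true, nsmul_eq_mul]
  rcases hkt with hk | rfl
  · rw [if_pos (by omega)]
    push_cast
    ring
  · rw [zero_mul, ite_self]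
    push_cast
    ring

lemma sum_integral_sigma0_trimmedBd (ha : a ∈ Icc 0 1) (ht : t ∈ Icc 0 1) (hkt : 2 ≤ k ∨ t = 0) :
    ∑ j ∈ Finset.range (k / 2 + 1),
        ∫ x in trimmedBd k a t (2 * j)..trimmedBd k a t (2 * j + 1), sigma0 k x =
      3 / 2 * (((k / 2 : ℕ) + a - t) * ell k) := by
  rw [← sum_trimmedBd_sub hkt, Finset.mul_sum]
  exact Finset.sum_congr rfl fun j hj => integral_sigma0 (Nat.le_of_lt_succ (Finset.mem_range.1 hj))
    (bd_two_mul_le_trimmedBd ht.1 j) (monotone_trimmedBd ha ht (2 * j).le_succ)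
    (trimmedBd_two_mul_add_one_le ha.2 j)

lemma sum_integral_sigmaSpike_trimmedBd {w z : ℝ} (hw : 0 ≤ w) (hwz : w ≤ z) (hzw : z + w ≤ 1)
    (ht : t ∈ Icc 0 1) (hkt : 2 ≤ k ∨ t = 0) :
    ∑ j ∈ Finset.range (k / 2 + 1),
        ∫ x in trimmedBd k z t (2 * j)..trimmedBd k z t (2 * j + 1), sigmaSpike k w z x =
      3 / 2 * (((k / 2 : ℕ) + z - t) * ell k) + w / 2 * ell k := by
  have hz : z ∈ Icc 0 1 := ⟨hw.trans hwz, by linarith⟩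
  have hlater : ∀ j ∈ Finset.range (k / 2),
      ∫ x in trimmedBd k z t (2 * (j + 1))..trimmedBd k z t (2 * (j + 1) + 1), sigmaSpike k w z x =
        3 / 2 * (trimmedBd k z t (2 * (j + 1) + 1) - trimmedBd k z t (2 * (j + 1))) := fun j hj =>
    integral_sigmaSpike_of_one_le hw hzw j.succ_pos (Finset.mem_range.1 hj)
      (bd_two_mul_le_trimmedBd ht.1 _) (monotone_trimmedBd hz ht (2 * (j + 1)).le_succ)
      (trimmedBd_two_mul_add_one_le hz.2 _)
  rw [← sum_trimmedBd_sub hkt, Finset.sum_range_succ', Finset.sum_range_succ',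
    Finset.sum_congr rfl hlater, ← Finset.mul_sum]
  simp only [mul_zero, zero_add, trimmedBd_zero, trimmedBd_one,
    integral_sigmaSpike_zero_mul_ell hw hwz hz.2]
  ring

lemma one_sub_mul_ell_mem_stackelbergPayoffs (hk : 1 ≤ k) (ha : a ∈ Icc 0 1) (ht : t ∈ Icc 0 1)
    (hkt : 2 ≤ k ∨ t = 0) {v : ℝ → ℝ} (hv : IntegrableOn v (Icc 0 1))
    (hhalf : 1 / 2 ≤ ∑ j ∈ Finset.range (k / 2 + 1),
      ∫ x in trimmedBd k a t (2 * j)..trimmedBd k a t (2 * j + 1), v x) :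
    1 - ((k / 2 : ℕ) + a - t) * ell k ∈ stackelbergPayoffs k (fun _ => 1) v := by
  have hmem := integral_sub_sum_mem_stackelbergPayoffs (vA := fun _ => 1) (integrable_const _) hv
    (monotone_trimmedBd ha ht) trimmedBd_zero (trimmedBd_add_one_self hk hkt) hhalf
  simpa only [integral_one, sub_zero, sum_trimmedBd_sub hkt] using hmem

end TrimmedBd

section Values

variable {k : ℕ}

theorem isGreatest_stackelbergPayoffs_sigma0 (hk : 1 ≤ k) :
    IsGreatest (stackelbergPayoffs k (fun _ => 1) (sigma0 k)) (2 / 3) := by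
  have hlen := half_add_mul_ell k
  constructor
  · have ha : (1 / 2 : ℝ) ∈ Icc 0 1 := by norm_num
    have ht : (0 : ℝ) ∈ Icc 0 1 := by norm_num
    have hpayoff : (2 / 3 : ℝ) = 1 - ((k / 2 : ℕ) + 1 / 2 - 0) * ell k := by linarith
    rw [hpayoff]
    refine one_sub_mul_ell_mem_stackelbergPayoffs hk ha ht (.inr rfl) (integrable_sigma0 k) ?_
    rw [sum_integral_sigma0_trimmedBd ha ht (.inr rfl)]
    linarith
  · have hbound : (2 / 3 : ℝ) = (∫ _ in (0 : ℝ)..1, (1 : ℝ)) - 1 / (2 * (3 / 2)) := by norm_num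
    rw [hbound]
    exact mem_upperBounds_stackelbergPayoffs (integrable_const _) (integrable_sigma0 k)
      (by norm_num) fun x _ => by simpa using sigma0_le hk x

theorem stackelbergValue_sigma0 (hk : 1 ≤ k) :
    stackelbergValue k (fun _ => 1) (sigma0 k) = 2 / 3 :=
  (isGreatest_stackelbergPayoffs_sigma0 hk).csSup_eq

lemma bddAbove_stackelbergPayoffs_sigmaSpike (hk : 1 ≤ k) (w z : ℝ) :
    BddAbove (stackelbergPayoffs k (fun _ => 1) (sigmaSpike k w z)) :=
  ⟨_, mem_upperBounds_stackelbergPayoffs (integrable_const _) (integrable_sigmaSpike k w z)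
    two_pos fun x _ => by simpa using sigmaSpike_le hk w z x⟩

theorem le_stackelbergValue_sigmaSpike (hk : 2 ≤ k) {w z : ℝ} (hz : 1 / 2 ≤ z) (hw : 0 ≤ w)
    (hzw : z + w ≤ 1) :
    2 / 3 + ell k * w / 3 ≤ stackelbergValue k (fun _ => 1) (sigmaSpike k w z) := by
  have hlen := half_add_mul_ell k
  have hwz : w ≤ z := by linarith
  have hz' : z ∈ Icc 0 1 := ⟨by linarith, by linarith⟩
  have ht : z - 1 / 2 + w / 3 ∈ Icc 0 1 := ⟨by linarith, by linarith⟩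
  have hpayoff :
      2 / 3 + ell k * w / 3 = 1 - ((k / 2 : ℕ) + z - (z - 1 / 2 + w / 3)) * ell k := by
    linear_combination hlen
  rw [hpayoff]
  refine le_csSup (bddAbove_stackelbergPayoffs_sigmaSpike (by omega) w z) <|
    one_sub_mul_ell_mem_stackelbergPayoffs (by omega) hz' ht (.inl hk)
      (integrable_sigmaSpike k w z) ?_
  rw [sum_integral_sigmaSpike_trimmedBd hw hwz hzw ht (.inl hk)]
  linarith

end Values

theorem spiked_stackelberg_general (k : ℕ) :
    (1 ≤ k → stackelbergValue k (fun _ => 1) (sigma0 k) = 2 / 3) ∧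
    (2 ≤ k → ∀ z w : ℝ, 1 / 2 ≤ z → 0 ≤ w → z + w ≤ 1 →
      2 / 3 + ell k * w / 3 ≤ stackelbergValue k (fun _ => 1) (sigmaSpike k w z)) :=
  ⟨stackelbergValue_sigma0, fun hk _ _ => le_stackelbergValue_sigmaSpike hk⟩

/-- Stackelberg values against spiked densities: for every `k ≥ 2`,
with Alice's value density uniform, (i) her Stackelberg value in the `k`-cut game against a
Bob with density `σ₀^k` equals `2/3`; (ii) for every `z ∈ [5/6, 11/12]` and `w ∈ (0, 1/48]`,
her Stackelberg value against a Bob with density `σ_{w;z}^k` is at least `2/3 + 4w/(27k)`. -/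
theorem spiked_stackelberg (k : ℕ) (hk : 2 ≤ k) :
    stackelbergValue k (fun _ => 1) (sigma0 k) = 2 / 3 ∧
    ∀ z ∈ Set.Icc (5/6 : ℝ) (11/12), ∀ w ∈ Set.Ioc (0 : ℝ) (1/48),
      2 / 3 + 4 * w / (27 * k) ≤ stackelbergValue k (fun _ => 1) (sigmaSpike k w z) := by
  refine ⟨(spiked_stackelberg_general k).1 (by omega), fun z hz w hw => ?_⟩
  exact (add_le_add_right (four_mul_div_le_ell_mul_div k hk hw.1.le) _).trans <|
    (spiked_stackelberg_general k).2 hk z w (by linarith [hz.1]) hw.1.le (by linarith [hz.2, hw.2])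

end
end
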